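/- Let 𝓑 be an admissible W-orbit of sets of mutually orthogonal positive roots, B ∈ 𝓑, and let i, j be nodes with i ∼ j such that r_i r_j·B = r_j·B. If r_i·B < B and r_j·B < B, then α_i + α_j ∈ B. -/

import Mathlib

/-!
Write `a = α i`, `b = α j`, so `⟪a, b⟫ = -1`. All members of the orbit are sets of mutually
orthogonal positive roots. If such a set `C` satisfies `r i · C = C`, then every `x ∈ C` is either
`a` or orthogonal to `a`: otherwise `⟪x, r i x⟫ = 2 - ⟪x, a⟫ ^ 2 = 1`, which is impossible for two
members of `C` (`eq_or_inner_eq_zero_of_fixed`). Applied to `C = r j · B`, this shows that either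
`a + b ∈ B`, or `⟪β, a⟫ = -⟪β, b⟫` for all `β ∈ B`.

In the second case `r i` and `r j` move the same elements of `B`. Let `m` be the least height of a
moved element. Then `r i · B < B` yields `β ∈ B` of height `m` with `⟪β, a⟫ = 1`, and `r j · B < B`
yields `γ ∈ B` of height `m` with `⟪γ, b⟫ = 1` (`exists_lowered`). The roots `β - a` and `γ - b`
have inner product `0 + 1 + 1 - 1 = 1`, so their difference is a root. Its height is `0`, whereas
no root has height `0`.
-/

open scoped InnerProductSpace

/-- A finite crystallographic simply laced root system `Φ` in a real inner
product space, normalized so that `⟪β, β⟫ = 2` for all roots, together with a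
fixed base `α 1, …, α n` (the nodes of the diagram `M`), the corresponding set
`Pos` of positive roots, and the height linear functional `ht`. -/
structure SLRS (V : Type) [NormedAddCommGroup V] [InnerProductSpace ℝ V] where
  /-- the number of nodes of the diagram -/
  n : ℕ
  /-- the set of roots -/
  Φ : Set V
  /-- the set of positive roots -/
  Pos : Set V
  /-- the simple roots -/
  α : Fin n → V
  /-- the height functional: heights are sums of coefficients on simple roots -/
  ht : V →ₗ[ℝ] ℝ
  finite : Φ.Finite
  pos_subset : Pos ⊆ Φ
  mem_pos_or_neg : ∀ β ∈ Φ, β ∈ Pos ∨ -β ∈ Pos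
  not_pos_and_neg : ∀ β ∈ Pos, -β ∉ Pos
  alpha_pos : ∀ i, α i ∈ Pos
  norm_two : ∀ β ∈ Φ, ⟪β, β⟫_ℝ = 2
  inner_int : ∀ β ∈ Φ, ∀ γ ∈ Φ, ∃ z : ℤ, ⟪β, γ⟫_ℝ = (z : ℝ)
  reflect_mem : ∀ β ∈ Φ, ∀ γ ∈ Φ, β - ⟪β, γ⟫_ℝ • γ ∈ Φ
  reduced : ∀ β ∈ Φ, ∀ t : ℝ, t • β ∈ Φ → t = 1 ∨ t = -1
  pos_coeff : ∀ β ∈ Pos, ∃ a : Fin n → ℕ, β = ∑ i, (a i : ℝ) • α i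
  ht_alpha : ∀ i, ht (α i) = 1

namespace SLRS

variable {V : Type} [NormedAddCommGroup V] [InnerProductSpace ℝ V] (S : SLRS V)

/-- Adjacency of two nodes of the diagram: `i ∼ j` iff `⟪α i, α j⟫ = -1`. -/
def adj (i j : Fin S.n) : Prop := ⟪S.α i, S.α j⟫_ℝ = -1

/-- The reflection along a root `δ` (normalized so that `⟪δ, δ⟫ = 2`). -/
def reflRoot (δ : V) : V → V := fun v => v - ⟪v, δ⟫_ℝ • δ

/-- The fundamental reflection `r i`. -/
def refl (i : Fin S.n) : V → V := reflRoot (S.α i)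

/-- A set of mutually orthogonal positive roots. -/
def IsOrthoSet (B : Set V) : Prop :=
  B ⊆ S.Pos ∧ ∀ β ∈ B, ∀ γ ∈ B, β ≠ γ → ⟪β, γ⟫_ℝ = 0

/-- The action of a map `w` on a set `B` of positive roots:
`w·B = Φ⁺ ∩ {± w β : β ∈ B}`. -/
def mapSet (w : V → V) (B : Set V) : Set V :=
  {x ∈ S.Pos | ∃ β ∈ B, w β = x ∨ w β = -x}

/-- The action of the fundamental reflection `r i` on a set of positive roots. -/
def rAct (i : Fin S.n) (B : Set V) : Set V := S.mapSet (S.refl i) B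

/-- The action of the reflection along a root `δ` on a set of positive roots. -/
def reflAct (δ : V) (B : Set V) : Set V := S.mapSet (reflRoot δ) B

/-- The `W`-orbit of `B`, `W` being generated by the fundamental reflections. -/
def orbitOf (B : Set V) : Set (Set V) :=
  {C | Relation.ReflTransGen (fun X Y => ∃ i, Y = S.rAct i X) B C}

/-- `𝓑` is a `W`-orbit of sets of mutually orthogonal positive roots. -/
def IsOrbit (𝓑 : Set (Set V)) : Prop :=
  ∃ B, S.IsOrthoSet B ∧ 𝓑 = S.orbitOf B

/-- Admissibility of a `W`-orbit of sets of mutually orthogonal positive roots. -/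
def Admissible (𝓑 : Set (Set V)) : Prop :=
  S.IsOrbit 𝓑 ∧ ∀ B ∈ 𝓑, ∀ i j : Fin S.n, i ≠ j → ¬ S.adj i j →
    (∃ γ, γ ∈ B ∧ γ - S.α i + S.α j ∈ B) → S.rAct i B = S.rAct j B

/-- The height order: `B < C` iff `B ≠ C` and the minimal height of an element
of `B \ C` is smaller than the minimal height of an element of `C \ B`. -/
def lt (B C : Set V) : Prop :=
  B ≠ C ∧ sInf (⇑S.ht '' (B \ C)) < sInf (⇑S.ht '' (C \ B))

/-- The map `V → V` determined by the word `l = [i₁, …, iₛ]`,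
namely `r i₁ ∘ r i₂ ∘ ⋯ ∘ r iₛ`. -/
def wordMap (l : List (Fin S.n)) : V → V := l.foldr (fun i f => S.refl i ∘ f) id

/-- A map belongs to the Weyl group `W` iff it is realized by a word in the
fundamental reflections. -/
def InW (w : V → V) : Prop := ∃ l : List (Fin S.n), S.wordMap l = w

/-- The Coxeter length of an element of `W`: the minimal length of a word in
the fundamental reflections representing it. -/
noncomputable def len (w : V → V) : ℕ :=
  sInf {k | ∃ l : List (Fin S.n), l.length = k ∧ S.wordMap l = w}

/-- The action of `w ∈ W` on a set of positive roots. -/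
def wAct (w : V → V) (B : Set V) : Set V := S.mapSet w B

/-- `r i₁ · (r i₂ · ⋯ (r iₛ · B))` for the word `l = [i₁, …, iₛ]`. -/
def suffixAct (l : List (Fin S.n)) (B : Set V) : Set V := l.foldr S.rAct B

/-- The chain `B > r iₛ · B > r iₛ₋₁ r iₛ · B > ⋯ > r i₁ ⋯ r iₛ · B` obtained by
successively applying the letters of the word `l = [i₁, …, iₛ]` to `B` is
strictly descending at every step. -/
def DescChain (l : List (Fin S.n)) (B : Set V) : Prop :=
  ∀ k < l.length, S.lt (S.suffixAct (l.drop k) B) (S.suffixAct (l.drop (k + 1)) B)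

end SLRS

open SLRS

variable {V : Type} [NormedAddCommGroup V] [InnerProductSpace ℝ V]

namespace SLRS

variable (S : SLRS V)

/-! ### Roots and heights -/

lemma neg_mem {β : V} (h : β ∈ S.Φ) : -β ∈ S.Φ := by
  have := S.reflect_mem β h β h
  rw [S.norm_two β h] at this
  convert this using 1
  module

lemma ht_nat {β : V} (h : β ∈ S.Pos) : ∃ k : ℕ, 1 ≤ k ∧ S.ht β = k := by
  obtain ⟨c, hc⟩ := S.pos_coeff β h
  have hs : S.ht β = ((∑ k, c k : ℕ) : ℝ) := by
    rw [hc]; simp [S.ht_alpha]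
  refine ⟨_, ?_, hs⟩
  by_contra hlt
  have h0 : ∑ k, c k = 0 := by omega
  have hb : β = 0 := by
    rw [hc]
    refine Finset.sum_eq_zero fun k hk => ?_
    rw [(Finset.sum_eq_zero_iff.1 h0) k hk]; simp
  have := S.norm_two β (S.pos_subset h)
  rw [hb] at this
  simp at this

lemma one_le_ht {β : V} (h : β ∈ S.Pos) : 1 ≤ S.ht β := by
  obtain ⟨k, hk, e⟩ := S.ht_nat h
  rw [e]; exact_mod_cast hk

lemma ht_ne_zero {β : V} (h : β ∈ S.Φ) : S.ht β ≠ 0 := by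
  intro h0
  rcases S.mem_pos_or_neg β h with h | h
  · linarith [S.one_le_ht h]
  · have := S.one_le_ht h
    rw [map_neg] at this; linarith

lemma pos_of_ht {β : V} (h : β ∈ S.Φ) (h0 : 0 ≤ S.ht β) : β ∈ S.Pos := by
  rcases S.mem_pos_or_neg β h with h | h
  · exact h
  · have := S.one_le_ht h
    rw [map_neg] at this; linarith

lemma eq_of_inner {β γ : V} (hβ : β ∈ S.Φ) (hγ : γ ∈ S.Φ) (h : ⟪β, γ⟫_ℝ = 2) : β = γ := by
  have : ⟪β - γ, β - γ⟫_ℝ = 0 := by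
    rw [real_inner_sub_sub_self, S.norm_two β hβ, S.norm_two γ hγ, h]; norm_num
  exact sub_eq_zero.1 (inner_self_eq_zero.1 this)

lemma inner_cases {β γ : V} (hβ : β ∈ S.Φ) (hγ : γ ∈ S.Φ) :
    ⟪β, γ⟫_ℝ = 0 ∨ ⟪β, γ⟫_ℝ = 1 ∨ ⟪β, γ⟫_ℝ = -1 ∨ β = γ ∨ β = -γ := by
  obtain ⟨z, hz⟩ := S.inner_int β hβ γ hγ
  have h1 : 0 ≤ ⟪β - γ, β - γ⟫_ℝ := real_inner_self_nonneg
  have h2 : 0 ≤ ⟪β + γ, β + γ⟫_ℝ := real_inner_self_nonneg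
  rw [real_inner_sub_sub_self, S.norm_two β hβ, S.norm_two γ hγ, hz] at h1
  rw [real_inner_add_add_self, S.norm_two β hβ, S.norm_two γ hγ, hz] at h2
  have h3 : z ≤ 2 := by
    have : (z : ℝ) ≤ 2 := by linarith
    exact_mod_cast this
  have h4 : -2 ≤ z := by
    have : (-2 : ℝ) ≤ z := by linarith
    exact_mod_cast this
  interval_cases z
  · exact Or.inr (Or.inr (Or.inr (Or.inr
      (S.eq_of_inner hβ (S.neg_mem hγ) (by rw [inner_neg_right, hz]; norm_num)))))
  · right; right; left; rw [hz]; norm_num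
  · left; rw [hz]; norm_num
  · right; left; rw [hz]; norm_num
  · exact Or.inr (Or.inr (Or.inr (Or.inl (S.eq_of_inner hβ hγ (by rw [hz]; norm_num)))))

lemma alpha_mem (i : Fin S.n) : S.α i ∈ S.Φ := S.pos_subset (S.alpha_pos i)

/-- For positive roots the last alternative of `inner_cases` does not occur. -/
lemma inner_cases_pos {β γ : V} (hβ : β ∈ S.Pos) (hγ : γ ∈ S.Pos) (hne : β ≠ γ) :
    ⟪β, γ⟫_ℝ = 0 ∨ ⟪β, γ⟫_ℝ = 1 ∨ ⟪β, γ⟫_ℝ = -1 := by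
  rcases S.inner_cases (S.pos_subset hβ) (S.pos_subset hγ) with h | h | h | h | h
  · exact Or.inl h
  · exact Or.inr (Or.inl h)
  · exact Or.inr (Or.inr h)
  · exact absurd h hne
  · exact absurd (h ▸ hβ) (S.not_pos_and_neg γ hγ)

lemma refl_mem (i : Fin S.n) {β : V} (h : β ∈ S.Φ) : S.refl i β ∈ S.Φ :=
  S.reflect_mem β h _ (S.alpha_mem i)

lemma ht_refl (i : Fin S.n) (β : V) : S.ht (S.refl i β) = S.ht β - ⟪β, S.α i⟫_ℝ := by
  simp [refl, reflRoot, S.ht_alpha]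

lemma inner_refl (i : Fin S.n) (β γ : V) :
    ⟪S.refl i β, γ⟫_ℝ = ⟪β, γ⟫_ℝ - ⟪β, S.α i⟫_ℝ * ⟪S.α i, γ⟫_ℝ := by
  simp [refl, reflRoot, inner_sub_left, inner_smul_left]

lemma inner_refl_refl (i : Fin S.n) (β γ : V) :
    ⟪S.refl i β, S.refl i γ⟫_ℝ = ⟪β, γ⟫_ℝ := by
  have h := S.norm_two _ (S.alpha_mem i)
  rw [inner_refl, real_inner_comm (S.refl i γ) β, real_inner_comm (S.refl i γ) (S.α i),
    inner_refl, inner_refl, h, real_inner_comm β γ, real_inner_comm β (S.α i)]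
  ring

lemma refl_refl (i : Fin S.n) (β : V) : S.refl i (S.refl i β) = β := by
  have h := S.norm_two _ (S.alpha_mem i)
  simp only [refl, reflRoot, inner_sub_left, real_inner_smul_left, h]
  module

lemma refl_neg (i : Fin S.n) (β : V) : S.refl i (-β) = -S.refl i β := by
  simp only [refl, reflRoot, inner_neg_left]
  module

/-- A simple reflection permutes the positive roots other than its own simple root. -/
lemma refl_pos (i : Fin S.n) {β : V} (h : β ∈ S.Pos) (hne : β ≠ S.α i) :
    S.refl i β ∈ S.Pos := by
  refine S.pos_of_ht (S.refl_mem i (S.pos_subset h)) ?_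
  have h1 := S.one_le_ht h
  rw [ht_refl]
  rcases S.inner_cases_pos h (S.alpha_pos i) hne with e | e | e <;> rw [e] <;> linarith

/-! ### Orthogonal sets -/

lemma exists_sign (i : Fin S.n) {B : Set V} (hB : B ⊆ S.Pos) {β : V} (h : β ∈ B) :
    ∃ x ∈ S.rAct i B, S.refl i β = x ∨ S.refl i β = -x := by
  rcases S.mem_pos_or_neg _ (S.refl_mem i (S.pos_subset (hB h))) with hp | hp
  · exact ⟨_, ⟨hp, β, h, Or.inl rfl⟩, Or.inl rfl⟩
  · exact ⟨_, ⟨hp, β, h, Or.inr (neg_neg _).symm⟩, Or.inr (neg_neg _).symm⟩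

lemma ortho_rAct (i : Fin S.n) {B : Set V} (hB : S.IsOrthoSet B) :
    S.IsOrthoSet (S.rAct i B) := by
  refine ⟨fun x hx => hx.1, ?_⟩
  rintro x ⟨hx, β, hβ, hxβ⟩ y ⟨hy, γ, hγ, hyγ⟩ hne
  have key : β ≠ γ → ⟪x, y⟫_ℝ = 0 := by
    intro hbc
    have h := S.inner_refl_refl i β γ
    rw [hB.2 β hβ γ hγ hbc] at h
    rcases hxβ with e | e <;> rcases hyγ with e' | e' <;> rw [e, e'] at h <;> simpa using h
  by_cases hbc : β = γ
  · subst hbc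
    exfalso
    rcases hxβ with e | e <;> rcases hyγ with e' | e' <;> rw [e] at e'
    · exact hne e'
    · exact S.not_pos_and_neg y hy (e' ▸ hx)
    · exact S.not_pos_and_neg x hx (e' ▸ hy)
    · exact hne (neg_injective e')
  · exact key hbc

lemma ortho_of_mem_orbit {𝓑 : Set (Set V)} (h : S.IsOrbit 𝓑) {B : Set V} (hB : B ∈ 𝓑) :
    S.IsOrthoSet B := by
  obtain ⟨B₀, h₀, rfl⟩ := h
  have hB' : Relation.ReflTransGen (fun X Y => ∃ i, Y = S.rAct i X) B₀ B := hB
  induction hB' with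
  | refl => exact h₀
  | tail h1 h2 ih =>
    obtain ⟨i, rfl⟩ := h2
    exact S.ortho_rAct i (ih h1)

lemma eq_or_inner_eq_zero_of_fixed (i : Fin S.n) {C : Set V} (hC : S.IsOrthoSet C)
    (hfix : S.rAct i C = C) {x : V} (hx : x ∈ C) : x = S.α i ∨ ⟪x, S.α i⟫_ℝ = 0 := by
  by_cases hne : x = S.α i
  · exact Or.inl hne
  right
  have hp := S.refl_pos i (hC.1 hx) hne
  have hm : S.refl i x ∈ C := hfix ▸ ⟨hp, x, hx, Or.inl rfl⟩
  have h2 := S.norm_two x (S.pos_subset (hC.1 hx))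
  have hin := S.inner_refl i x x
  rw [real_inner_comm x (S.α i), h2] at hin
  have hdich : S.refl i x = x ∨ ⟪S.refl i x, x⟫_ℝ = 0 := by
    by_cases e : S.refl i x = x
    · exact Or.inl e
    · exact Or.inr (hC.2 _ hm _ hx e)
  rcases S.inner_cases_pos (hC.1 hx) (S.alpha_pos i) hne with e | e | e
  · exact e
  all_goals
    exfalso
    rw [e] at hin
    rcases hdich with h | h
    · rw [h, h2] at hin; norm_num at hin
    · rw [h] at hin; norm_num at hin

/-- If `r i · B < B`, then among the elements of `B` moved by `r i`, one of minimal height is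
lowered by `r i`. -/
lemma exists_lowered (i : Fin S.n) {B : Set V} (hB : S.IsOrthoSet B) (ha : S.α i ∉ B)
    (hlt : S.lt (S.rAct i B) B) :
    ∃ β ∈ B, ⟪β, S.α i⟫_ℝ = 1 ∧ ∀ γ ∈ B, ⟪γ, S.α i⟫_ℝ ≠ 0 → S.ht β ≤ S.ht γ := by
  have hne : ∀ β ∈ B, β ≠ S.α i := fun β hβ e => ha (e ▸ hβ)
  have hpos : ∀ β ∈ B, S.refl i β ∈ S.Pos := fun β hβ => S.refl_pos i (hB.1 hβ) (hne β hβ)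
  have hfixed : ∀ β : V, ⟪β, S.α i⟫_ℝ = 0 → S.refl i β = β := by
    intro β h; simp [refl, reflRoot, h]
  have hmoved : ∀ β ∈ B, ⟪β, S.α i⟫_ℝ ≠ 0 → S.refl i β ∉ B := by
    intro β hβ h hm
    have hin := S.inner_refl i β β
    rw [real_inner_comm β (S.α i), S.norm_two β (S.pos_subset (hB.1 hβ))] at hin
    by_cases e : S.refl i β = β
    · rw [e, S.norm_two β (S.pos_subset (hB.1 hβ))] at hin
      exact h (by nlinarith)
    · rw [hB.2 _ hm _ hβ e] at hin
      rcases S.inner_cases_pos (hB.1 hβ) (S.alpha_pos i) (hne β hβ) with e | e | e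
      · exact h e
      all_goals rw [e] at hin; norm_num at hin
  have hact : ∀ x, x ∈ S.rAct i B ↔ ∃ β ∈ B, S.refl i β = x := by
    intro x
    constructor
    · rintro ⟨hx, β, hβ, e | e⟩
      · exact ⟨β, hβ, e⟩
      · exact absurd (e ▸ hpos β hβ) (S.not_pos_and_neg x hx)
    · rintro ⟨β, hβ, rfl⟩
      exact ⟨hpos β hβ, β, hβ, Or.inl rfl⟩
  have hd1 : B \ S.rAct i B = {β ∈ B | ⟪β, S.α i⟫_ℝ ≠ 0} := by
    ext β
    constructor
    · rintro ⟨h1, h2⟩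
      exact ⟨h1, fun h => h2 ((hact β).2 ⟨β, h1, hfixed β h⟩)⟩
    · rintro ⟨h1, h2⟩
      refine ⟨h1, fun h => ?_⟩
      obtain ⟨γ, hγ, e⟩ := (hact β).1 h
      refine hmoved β h1 h2 ?_
      rw [← e, refl_refl]; exact hγ
  have hd2 : S.rAct i B \ B = S.refl i '' {β ∈ B | ⟪β, S.α i⟫_ℝ ≠ 0} := by
    ext x
    constructor
    · rintro ⟨h1, h2⟩
      obtain ⟨γ, hγ, rfl⟩ := (hact x).1 h1
      refine ⟨γ, ⟨hγ, fun h => h2 ?_⟩, rfl⟩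
      rw [hfixed γ h]; exact hγ
    · rintro ⟨γ, ⟨hγ, h⟩, rfl⟩
      exact ⟨(hact _).2 ⟨γ, hγ, rfl⟩, hmoved γ hγ h⟩
  obtain ⟨-, hlt⟩ := hlt
  rw [hd1, hd2] at hlt
  have hfin : {β ∈ B | ⟪β, S.α i⟫_ℝ ≠ 0}.Finite :=
    S.finite.subset fun β h => S.pos_subset (hB.1 h.1)
  -- If nothing were moved, both infima would take the default value `0`.
  have hnon : {β ∈ B | ⟪β, S.α i⟫_ℝ ≠ 0}.Nonempty := by
    by_contra h
    rw [Set.not_nonempty_iff_eq_empty] at h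
    simp [h] at hlt
  obtain ⟨_, ⟨β, ⟨hβ, hβa⟩, rfl⟩, hs⟩ :=
    ((hnon.image (S.refl i)).image S.ht).csInf_mem ((hfin.image (S.refl i)).image S.ht)
  rw [← hs, ht_refl] at hlt
  have hall : ∀ γ ∈ B, ⟪γ, S.α i⟫_ℝ ≠ 0 → S.ht β - ⟪β, S.α i⟫_ℝ < S.ht γ := fun γ hγ h =>
    hlt.trans_le (csInf_le (hfin.image S.ht).bddBelow ⟨γ, ⟨hγ, h⟩, rfl⟩)
  have hself := hall β hβ hβa
  have h1 : ⟪β, S.α i⟫_ℝ = 1 := by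
    rcases S.inner_cases_pos (hB.1 hβ) (S.alpha_pos i) (hne β hβ) with e | e | e
    · exact absurd e hβa
    · exact e
    · rw [e] at hself; linarith
  refine ⟨β, hβ, h1, fun γ hγ h => ?_⟩
  have h2 := hall γ hγ h
  obtain ⟨k, -, ek⟩ := S.ht_nat (hB.1 hβ)
  obtain ⟨l, -, el⟩ := S.ht_nat (hB.1 hγ)
  rw [h1, ek, el] at h2
  rw [ek, el]
  have : k < l + 1 := by
    have : (k : ℝ) < l + 1 := by linarith
    exact_mod_cast this
  exact_mod_cast Nat.lt_succ_iff.1 this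

end SLRS

/-- Lemma 3.2: for `𝓑` admissible, `B ∈ 𝓑`, nodes `i ∼ j`
with `r i r j · B = r j · B`: if `r i · B < B` and `r j · B < B`, then
`α i + α j ∈ B`. -/
theorem sum_mem_of_fixed (S : SLRS V) (𝓑 : Set (Set V))
    (hadm : S.Admissible 𝓑) (B : Set V) (hB : B ∈ 𝓑) (i j : Fin S.n)
    (hij : S.adj i j) (hfix : S.rAct i (S.rAct j B) = S.rAct j B)
    (hi : S.lt (S.rAct i B) B) (hj : S.lt (S.rAct j B) B) :
    S.α i + S.α j ∈ B := by
  have hO := S.ortho_of_mem_orbit hadm.1 hB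
  have hab : ⟪S.α i, S.α j⟫_ℝ = -1 := hij
  have hba : ⟪S.α j, S.α i⟫_ℝ = -1 := by rw [real_inner_comm]; exact hab
  have haa := S.norm_two _ (S.alpha_mem i)
  have hbb := S.norm_two _ (S.alpha_mem j)
  by_contra hnot
  have hjα : S.refl j (S.α i) = S.α i + S.α j := by
    simp only [SLRS.refl, reflRoot, hab]; module
  have horth : ∀ c ∈ B, ⟪c, S.α i⟫_ℝ = -⟪c, S.α j⟫_ℝ := by
    intro c hc
    obtain ⟨x, hx, hcx⟩ := S.exists_sign j hO.1 hc
    have hin := S.inner_refl j c (S.α i)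
    rw [hba] at hin
    rcases S.eq_or_inner_eq_zero_of_fixed i (S.ortho_rAct j hO) hfix hx with rfl | h
    · exfalso
      rcases hcx with e | e
      · have := S.refl_refl j c
        rw [e, hjα] at this
        exact hnot (this ▸ hc)
      · have := S.refl_refl j c
        rw [e, S.refl_neg, hjα] at this
        have h1 := S.one_le_ht (hO.1 hc)
        rw [← this, map_neg, map_add, S.ht_alpha, S.ht_alpha] at h1
        linarith
    · rcases hcx with e | e <;> rw [e] at hin
      · rw [h] at hin; linarith
      · rw [inner_neg_left, h] at hin; linarith
  have hai : S.α i ∉ B := fun h => by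
    have := horth _ h; rw [haa, hab] at this; linarith
  have hbj : S.α j ∉ B := fun h => by
    have := horth _ h; rw [hbb, hba] at this; linarith
  obtain ⟨β, hβ, hβa, hβm⟩ := S.exists_lowered i hO hai hi
  obtain ⟨γ, hγ, hγb, hγm⟩ := S.exists_lowered j hO hbj hj
  have hβb : ⟪β, S.α j⟫_ℝ = -1 := by linarith [horth β hβ]
  have hγa : ⟪γ, S.α i⟫_ℝ = -1 := by linarith [horth γ hγ]
  have hht : S.ht β = S.ht γ :=
    le_antisymm (hβm γ hγ (by rw [hγa]; norm_num)) (hγm β hβ (by rw [hβb]; norm_num))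
  have hβγ : ⟪β, γ⟫_ℝ = 0 := hO.2 β hβ γ hγ (by rintro rfl; linarith)
  have hβ' := S.refl_mem i (S.pos_subset (hO.1 hβ))
  have hγ' := S.refl_mem j (S.pos_subset (hO.1 hγ))
  have hone : ⟪S.refl i β, S.refl j γ⟫_ℝ = 1 := by
    simp only [SLRS.refl, reflRoot, hβa, hγb, one_smul, inner_sub_left, inner_sub_right, hβγ, hβb, hab,
      real_inner_comm γ (S.α i), hγa]
    norm_num
  have hroot := S.reflect_mem _ hβ' _ hγ'
  refine S.ht_ne_zero hroot ?_
  rw [hone, one_smul, map_sub, S.ht_refl, S.ht_refl, hβa, hγb, hht, sub_self]
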